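/- arXiv:1611.00265 — 6 statements merged into one kernel-verified Lean document; each statement's English description precedes it below -/
import Mathlib

section
/- Let X be an ∞-pseudo-metric space, let R, ε₀, ε₁ > 0, and let φ = {φ_s}_{s∈S} be a partition of unity on X that is (ε₀,R)-continuous as a map X → ℓ¹(S). Suppose {C_s}_{s∈S} is a family of pairwise disjoint sets and for each s ∈ S there is an (ε₁,R)-continuous function f_s from the stratum φ_s⁻¹((0,1]) to the unit sphere of ℓ¹(C_s). Then the function f : X → ℓ¹(⋃_{s∈S} C_s) defined by f(x) = Σ_{s∈S} φ_s(x)·f_s(x) takes values in the unit sphere of ℓ¹(⋃_{s∈S} C_s) and is (ε₀+ε₁, R)-continuous. -/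
open scoped ENNReal

/-
On the block `C s` the difference of the two glued vectors splits as
  `a • u - b • v = (a - b) • v + a • (u - v)`.
If both weights are positive, then `u` and `v` are unit vectors at distance at most `ε`, so the
block contributes at most `|a - b| + a * ε`. If one weight vanishes, its vector is arbitrary, but
the block then contributes exactly the other weight, which is `|a - b|`. Summing over `s` gives
the distance of the weight families plus `ε` times the total mass.
-/

theorem hasSum_sigma_of_nonneg {S : Type*} {C : S → Type*} {f : (Σ s, C s) → ℝ} {g : S → ℝ}
    {m : ℝ} (hf : ∀ p, 0 ≤ f p) (hfg : ∀ s, HasSum (fun c => f ⟨s, c⟩) (g s)) (hg : HasSum g m) :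
    HasSum f m := by
  refine hg.sigma_of_hasSum hfg ((summable_sigma_of_nonneg hf).2 ⟨fun s => (hfg s).summable, ?_⟩)
  simpa only [(hfg _).tsum_eq] using hg.summable

theorem tsum_le_of_nonneg_of_le_of_hasSum {ι : Type*} {f g : ι → ℝ} {m : ℝ} (hf : ∀ i, 0 ≤ f i)
    (hfg : ∀ i, f i ≤ g i) (hg : HasSum g m) : ∑' i, f i ≤ m :=
  hasSum_le hfg (hg.summable.of_nonneg_of_le hf hfg).hasSum hg

theorem summable_norm_sub {ι E : Type*} [SeminormedAddCommGroup E] {u v : ι → E}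
    (hu : Summable fun i => ‖u i‖) (hv : Summable fun i => ‖v i‖) :
    Summable fun i => ‖u i - v i‖ :=
  (hu.add hv).of_nonneg_of_le (fun _ => norm_nonneg _) fun _ => norm_sub_le _ _

section WeightedVector

variable {ι E : Type*} [SeminormedAddCommGroup E] [NormedSpace ℝ E] {a b ε : ℝ} {u v : ι → E}

theorem norm_smul_sub_smul_le (a b : ℝ) (x y : E) :
    ‖a • x - b • y‖ ≤ |a - b| * ‖y‖ + |a| * ‖x - y‖ :=
  calc
    ‖a • x - b • y‖ = ‖(a - b) • y + a • (x - y)‖ := by congr 1; module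
    _ ≤ ‖(a - b) • y‖ + ‖a • (x - y)‖ := norm_add_le _ _
    _ = |a - b| * ‖y‖ + |a| * ‖x - y‖ := by simp only [norm_smul, Real.norm_eq_abs]

theorem hasSum_norm_smul_of_nonneg (ha : 0 ≤ a) (hu : 0 < a → HasSum (fun i => ‖u i‖) 1) :
    HasSum (fun i => ‖a • u i‖) a := by
  rcases ha.eq_or_lt with rfl | ha
  · simpa only [zero_smul, norm_zero] using hasSum_zero
  · simpa only [norm_smul, Real.norm_of_nonneg ha.le, mul_one] using (hu ha).mul_left a

theorem tsum_norm_smul_sub_smul_le_of_hasSum (hu : HasSum (fun i => ‖u i‖) 1)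
    (hv : HasSum (fun i => ‖v i‖) 1) :
    ∑' i, ‖a • u i - b • v i‖ ≤ |a - b| + |a| * ∑' i, ‖u i - v i‖ := by
  have hbound : HasSum (fun i => |a - b| * ‖v i‖ + |a| * ‖u i - v i‖)
      (|a - b| + |a| * ∑' i, ‖u i - v i‖) := by
    simpa only [mul_one] using (hv.mul_left |a - b|).add
      ((summable_norm_sub hu.summable hv.summable).hasSum.mul_left |a|)
  exact tsum_le_of_nonneg_of_le_of_hasSum (fun _ => norm_nonneg _)
    (fun i => norm_smul_sub_smul_le a b (u i) (v i)) hbound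

theorem tsum_norm_smul_sub_smul_le (ha : 0 ≤ a) (hb : 0 ≤ b) (hε : 0 ≤ ε)
    (hu : 0 < a → HasSum (fun i => ‖u i‖) 1) (hv : 0 < b → HasSum (fun i => ‖v i‖) 1)
    (huv : 0 < a → 0 < b → ∑' i, ‖u i - v i‖ ≤ ε) :
    ∑' i, ‖a • u i - b • v i‖ ≤ |a - b| + a * ε := by
  rcases ha.eq_or_lt with rfl | ha'
  · simp only [zero_smul, zero_sub, norm_neg, abs_neg, zero_mul, add_zero,
      (hasSum_norm_smul_of_nonneg hb hv).tsum_eq, abs_of_nonneg hb, le_refl]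
  rcases hb.eq_or_lt with rfl | hb'
  · simpa only [zero_smul, sub_zero, (hasSum_norm_smul_of_nonneg ha hu).tsum_eq,
      abs_of_nonneg ha] using le_add_of_nonneg_right (mul_nonneg ha hε)
  calc
    ∑' i, ‖a • u i - b • v i‖ ≤ |a - b| + |a| * ∑' i, ‖u i - v i‖ :=
      tsum_norm_smul_sub_smul_le_of_hasSum (hu ha') (hv hb')
    _ ≤ |a - b| + a * ε := by
      rw [abs_of_nonneg ha]
      gcongr
      exact huv ha' hb'

end WeightedVector

/-- The weighted sum `∑ s, a s • u s` of vectors `u s` supported on the blocks `C s` of a disjoint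
union. The disjoint union is the sigma type, and the vectors are families of coordinates, with no
summability built in. -/
def weightedGlue {S R E : Type*} {C : S → Type*} [SMul R E] (a : S → R) (u : ∀ s, C s → E) :
    (Σ s, C s) → E :=
  fun p => a p.1 • u p.1 p.2

namespace weightedGlue

variable {S E : Type*} {C : S → Type*} [SeminormedAddCommGroup E] [NormedSpace ℝ E]
  {a b : S → ℝ} {m n ε : ℝ} {u v : ∀ s, C s → E}

theorem hasSum_norm (ha : ∀ s, 0 ≤ a s) (ha_sum : HasSum a m)
    (hu : ∀ s, 0 < a s → HasSum (fun c => ‖u s c‖) 1) :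
    HasSum (fun p => ‖weightedGlue a u p‖) m :=
  hasSum_sigma_of_nonneg (fun _ => norm_nonneg _)
    (fun s => hasSum_norm_smul_of_nonneg (ha s) (hu s)) ha_sum

theorem tsum_norm_sub_le (ha : ∀ s, 0 ≤ a s) (hb : ∀ s, 0 ≤ b s) (hε : 0 ≤ ε)
    (ha_sum : HasSum a m) (hb_sum : HasSum b n)
    (hu : ∀ s, 0 < a s → HasSum (fun c => ‖u s c‖) 1)
    (hv : ∀ s, 0 < b s → HasSum (fun c => ‖v s c‖) 1)
    (huv : ∀ s, 0 < a s → 0 < b s → ∑' c, ‖u s c - v s c‖ ≤ ε) :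
    ∑' p, ‖weightedGlue a u p - weightedGlue b v p‖ ≤ ∑' s, |a s - b s| + m * ε := by
  have hsummable : Summable fun p => ‖weightedGlue a u p - weightedGlue b v p‖ :=
    summable_norm_sub (hasSum_norm ha ha_sum hu).summable (hasSum_norm hb hb_sum hv).summable
  have hbound : HasSum (fun s => |a s - b s| + a s * ε) (∑' s, |a s - b s| + m * ε) :=
    (ha_sum.summable.sub hb_sum.summable).abs.hasSum.add (ha_sum.mul_right ε)
  rw [hsummable.tsum_sigma]
  exact tsum_le_of_nonneg_of_le_of_hasSum (fun _ => tsum_nonneg fun _ => norm_nonneg _)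
    (fun s => tsum_norm_smul_sub_smul_le (ha s) (hb s) hε (hu s) (hv s) (huv s)) hbound

end weightedGlue

theorem stmt0_general {X S E : Type*} {C : S → Type*} [SeminormedAddCommGroup E] [NormedSpace ℝ E]
    (r : X → X → Prop) {ε₀ ε₁ : ℝ} (hε₁ : 0 ≤ ε₁) (φ : S → X → ℝ) (hφ : ∀ s x, 0 ≤ φ s x)
    (hφ_sum : ∀ x, HasSum (fun s => φ s x) 1)
    (hφ_cont : ∀ x y, r x y → ∑' s, |φ s x - φ s y| ≤ ε₀)
    (f : ∀ s, X → C s → E) (hf_sphere : ∀ s x, 0 < φ s x → HasSum (fun c => ‖f s x c‖) 1)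
    (hf_cont : ∀ s x y, 0 < φ s x → 0 < φ s y → r x y → ∑' c, ‖f s x c - f s y c‖ ≤ ε₁) :
    (∀ x, HasSum (fun p => ‖weightedGlue (φ · x) (f · x) p‖) 1) ∧
    ∀ x y, r x y →
      ∑' p, ‖weightedGlue (φ · x) (f · x) p - weightedGlue (φ · y) (f · y) p‖ ≤ ε₀ + ε₁ := by
  refine ⟨fun x => weightedGlue.hasSum_norm (hφ · x) (hφ_sum x) (hf_sphere · x),
    fun x y hxy => ?_⟩
  calc
    ∑' p, ‖weightedGlue (φ · x) (f · x) p - weightedGlue (φ · y) (f · y) p‖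
        ≤ ∑' s, |φ s x - φ s y| + 1 * ε₁ :=
      weightedGlue.tsum_norm_sub_le (hφ · x) (hφ · y) hε₁ (hφ_sum x) (hφ_sum y)
        (hf_sphere · x) (hf_sphere · y) fun s hx hy => hf_cont s x y hx hy hxy
    _ ≤ ε₀ + ε₁ := by
      rw [one_mul]
      gcongr
      exact hφ_cont x y hxy

/-- If `φ` is an `(ε₀,R)`-continuous partition of unity on an ∞-pseudo-metric
space `X` and each stratum `φ_s⁻¹(0,1]` carries an `(ε₁,R)`-continuous map `f_s` into the
unit sphere of `ℓ¹(C_s)` (the `C_s` pairwise disjoint, modeled as a sigma type), then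
`f(x) = Σ_s φ_s(x)·f_s(x)` takes values in the unit sphere of `ℓ¹(⋃_s C_s)` and is
`(ε₀+ε₁,R)`-continuous. -/
theorem stmt0 {X S : Type} [PseudoEMetricSpace X] (C : S → Type)
    (R ε₀ ε₁ : ℝ) (hR : 0 < R) (hε₀ : 0 < ε₀) (hε₁ : 0 < ε₁)
    (φ : S → X → ℝ)
    (hφ01 : ∀ s x, 0 ≤ φ s x ∧ φ s x ≤ 1)
    (hφsum : ∀ x, HasSum (fun s => φ s x) 1)
    (hφcont : ∀ x y : X, edist x y ≤ ENNReal.ofReal R →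
      (∑' s, |φ s x - φ s y|) ≤ ε₀)
    (f : ∀ s, X → C s → ℝ)
    (hfl1 : ∀ s x, 0 < φ s x → Summable (fun c => |f s x c|))
    (hfsphere : ∀ s x, 0 < φ s x → (∑' c, |f s x c|) = 1)
    (hfcont : ∀ s, ∀ x y : X, 0 < φ s x → 0 < φ s y →
      edist x y ≤ ENNReal.ofReal R → (∑' c, |f s x c - f s y c|) ≤ ε₁) :
    (∀ x : X, (∑' p : Σ s, C s, |φ p.1 x * f p.1 x p.2|) = 1) ∧
    (∀ x y : X, edist x y ≤ ENNReal.ofReal R →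
      (∑' p : Σ s, C s, |φ p.1 x * f p.1 x p.2 - φ p.1 y * f p.1 y p.2|) ≤ ε₀ + ε₁) :=
  have key := stmt0_general (fun x y => edist x y ≤ ENNReal.ofReal R) hε₁.le φ
    (fun s x => (hφ01 s x).1) hφsum hφcont f
    (fun s x h => (hfl1 s x h).hasSum_iff.2 (hfsphere s x h)) hfcont
  ⟨fun x => (key.1 x).tsum_eq, key.2⟩
end

section
/- Let X be an ∞-pseudo-metric space, let m be a positive integer, and let R, ε > 0. Let 𝒱 = {V_s}_{s∈S} be a cover of X of multiplicity at most m at each point (each x ∈ X belongs to at most m of the sets V_s) and of Lebesgue number at least 4mR/ε (for every x ∈ X there is s ∈ S with B(x, 4mR/ε) ⊆ V_s). Then the partition of unity φ_R^𝒱 associated to 𝒱 is a well-defined partition of unity on X indexed by S and is (ε, R)-continuous as a map X → ℓ¹(S). -/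
open scoped ENNReal

/-- There is a chain `x = x_0, x_1, …, x_k` with `x_k ∉ V` and consecutive distances `≤ R`. -/
def HasChain {X : Type} [PseudoEMetricSpace X] (R : ℝ) (x : X) (V : Set X) (k : ℕ) : Prop :=
  ∃ c : ℕ → X, c 0 = x ∧ c k ∉ V ∧ ∀ i < k, edist (c i) (c (i + 1)) ≤ ENNReal.ofReal R

/-- The index `i_R(x,V)`: the smallest `k` admitting such a chain, `∞` if none exists. -/
noncomputable def idxR {X : Type} [PseudoEMetricSpace X] (R : ℝ) (x : X) (V : Set X) : ℕ∞ :=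
  sInf {n : ℕ∞ | ∃ k : ℕ, (k : ℕ∞) = n ∧ HasChain R x V k}

open Classical in
/-- The partition of unity `φ_R^𝒱` associated to a cover `𝒱 = {V_s}`. -/
noncomputable def phiV {X S : Type} [PseudoEMetricSpace X] (R : ℝ) (V : S → Set X)
    (s : S) (x : X) : ℝ :=
  if ∀ t, idxR R x (V t) ≠ ⊤ then
    ((idxR R x (V s)).toNat : ℝ) / ∑' t, ((idxR R x (V t)).toNat : ℝ)
  else if idxR R x (V s) = ⊤ then 1 / ({t | idxR R x (V t) = ⊤}.ncard : ℝ) else 0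

/-!
Write `φ_s(x) = w_s(x) / W(x)` with `W(x) = ∑ₜ w_t(x)`, where `w_s(x)` is the index `i_R(x, V_s)`,
or the indicator of its being infinite as soon as some index at `x` is infinite. If `d(x, y) ≤ R`,
then prepending `x` to a chain from `y` shows that indices at `x` and `y` differ by at most one;
since `w_s(x) = 0` when `x ∉ V_s`, this gives `∑ₛ |w_s(x) - w_s(y)| ≤ 2m`. Since
`‖a / ‖a‖₁ - b / ‖b‖₁‖₁ ≤ 2 ‖a - b‖₁ / ‖a‖₁` in `ℓ¹`, it follows that
`‖φ(x) - φ(y)‖₁ ≤ 4m / W(x)`. If some index at `x` is infinite, then `w(x) = w(y)`. Otherwise a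
chain leaving the ball `B(x, 4mR/ε)` has more than `4m/ε` steps, whence `W(x) ≥ 4m/ε`.
-/

theorem abs_div_sub_div_le {K : Type*} [Field K] [LinearOrder K] [IsStrictOrderedRing K]
    {a b A B : K} (hb : 0 ≤ b) (hA : 0 < A) (hB : 0 < B) :
    |a / A - b / B| ≤ (|a - b| + b / B * |B - A|) / A :=
  calc |a / A - b / B| = |(a - b) + b / B * (B - A)| / A := by
        rw [← abs_of_pos hA, ← abs_div, abs_of_pos hA]
        congr 1; field_simp; ring
    _ ≤ (|a - b| + |b / B * (B - A)|) / A := by gcongr; exact abs_add_le _ _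
    _ = (|a - b| + b / B * |B - A|) / A := by rw [abs_mul, abs_of_nonneg (div_nonneg hb hB.le)]

section Tsum

variable {ι : Type*}

theorem tsum_le_ncard_nsmul {M : Type*} [AddCommMonoid M] [PartialOrder M] [IsOrderedAddMonoid M]
    [TopologicalSpace M] {f : ι → M} {T : Set ι} {c : M} (hT : T.Finite)
    (hsupp : Function.support f ⊆ T) (hc : ∀ i ∈ T, f i ≤ c) :
    ∑' i, f i ≤ T.ncard • c := by
  rw [tsum_eq_sum (s := hT.toFinset) fun i hi => ?_, Set.ncard_eq_toFinset_card T hT]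
  · exact Finset.sum_le_card_nsmul _ _ _ fun i hi => hc i (hT.mem_toFinset.1 hi)
  · exact Function.notMem_support.1 fun h => hi (hT.mem_toFinset.2 (hsupp h))

theorem tsum_abs_div_tsum_sub_div_tsum_le {a b : ι → ℝ} (ha : Summable a) (hb : Summable b)
    (hb0 : ∀ i, 0 ≤ b i) (hA : 0 < ∑' i, a i) (hB : 0 < ∑' i, b i) :
    ∑' i, |a i / (∑' j, a j) - b i / (∑' j, b j)| ≤
      2 * (∑' i, |a i - b i|) / ∑' i, a i := by
  set A := ∑' i, a i with hA_def
  set B := ∑' i, b i with hB_def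
  have hab : Summable fun i => |a i - b i| := (ha.sub hb).abs
  have hcorr : Summable fun i => b i / B * |B - A| := (hb.div_const B).mul_right _
  have hdiff : Summable fun i => |a i / A - b i / B| :=
    ((ha.div_const A).sub (hb.div_const B)).abs
  have hBA : |B - A| ≤ ∑' i, |a i - b i| := by
    rw [abs_sub_comm, hA_def, hB_def, ← ha.tsum_sub hb]
    exact norm_tsum_le_tsum_norm (ha.sub hb).norm
  calc ∑' i, |a i / A - b i / B|
      ≤ ∑' i, (|a i - b i| + b i / B * |B - A|) / A :=
        hdiff.tsum_le_tsum (fun i => abs_div_sub_div_le (hb0 i) hA hB)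
          ((hab.add hcorr).div_const A)
    _ = (∑' i, |a i - b i| + |B - A|) / A := by
        rw [tsum_div_const, hab.tsum_add hcorr, tsum_mul_right, tsum_div_const, div_self hB.ne',
          one_mul]
    _ ≤ 2 * (∑' i, |a i - b i|) / A := by gcongr; linarith

end Tsum

section Index

variable {X : Type} [PseudoEMetricSpace X] {R : ℝ} {x y : X} {U : Set X} {k : ℕ}

theorem HasChain.cons (hxy : edist x y ≤ ENNReal.ofReal R) (h : HasChain R y U k) :
    HasChain R x U (k + 1) := by
  obtain ⟨c, rfl, hk, hc⟩ := h
  refine ⟨fun n => Nat.casesOn n x c, rfl, hk, fun i hi => ?_⟩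
  cases i with
  | zero => exact hxy
  | succ j => exact hc j (Nat.lt_of_succ_lt_succ hi)

theorem HasChain.exists_notMem_edist_le (h : HasChain R x U k) :
    ∃ z ∉ U, edist x z ≤ k * ENNReal.ofReal R := by
  obtain ⟨c, rfl, hk, hc⟩ := h
  refine ⟨c k, hk, ?_⟩
  calc edist (c 0) (c k) ≤ ∑ i ∈ Finset.range k, edist (c i) (c (i + 1)) :=
        edist_le_range_sum_edist c k
    _ ≤ k * ENNReal.ofReal R := by
        simpa using Finset.sum_le_card_nsmul _ _ _ fun i hi => hc i (Finset.mem_range.1 hi)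

theorem HasChain.idxR_le (h : HasChain R x U k) : idxR R x U ≤ k :=
  sInf_le ⟨k, rfl, h⟩

theorem hasChain_toNat_idxR (h : idxR R x U ≠ ⊤) : HasChain R x U (idxR R x U).toNat := by
  have hne : {n : ℕ∞ | ∃ k : ℕ, (k : ℕ∞) = n ∧ HasChain R x U k}.Nonempty :=
    Set.nonempty_iff_ne_empty.2 fun he => h (by rw [idxR, he, sInf_empty])
  obtain ⟨k, hk, hc⟩ := csInf_mem hne
  rwa [idxR, ← hk, ENat.toNat_natCast]

theorem idxR_eq_zero_iff : idxR R x U = 0 ↔ x ∉ U := by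
  refine ⟨fun h => ?_, fun hx => ?_⟩
  · obtain ⟨c, rfl, hk, -⟩ := hasChain_toNat_idxR (h ▸ ENat.zero_ne_top)
    simpa [h] using hk
  · have h0 : HasChain R x U 0 := ⟨fun _ => x, rfl, hx, fun _ hi => absurd hi (Nat.not_lt_zero _)⟩
    simpa using h0.idxR_le

theorem idxR_le_idxR_add_one (hxy : edist x y ≤ ENNReal.ofReal R) :
    idxR R x U ≤ idxR R y U + 1 := by
  by_cases h : idxR R y U = ⊤
  · simp [h]
  · simpa [ENat.natCast_toNat h] using ((hasChain_toNat_idxR h).cons hxy).idxR_le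

theorem idxR_eq_top_iff_of_edist_le (hxy : edist x y ≤ ENNReal.ofReal R) :
    idxR R x U = ⊤ ↔ idxR R y U = ⊤ := by
  have hle {x y : X} (hxy : edist x y ≤ ENNReal.ofReal R) (hx : idxR R x U = ⊤) :
      idxR R y U = ⊤ := by
    simpa [hx] using idxR_le_idxR_add_one (U := U) hxy
  exact ⟨hle hxy, hle (edist_comm x y ▸ hxy)⟩

theorem toNat_idxR_le_toNat_idxR_add_one (hxy : edist x y ≤ ENNReal.ofReal R) :
    (idxR R x U).toNat ≤ (idxR R y U).toNat + 1 := by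
  by_cases h : idxR R y U = ⊤
  · simp [h, (idxR_eq_top_iff_of_edist_le hxy).2 h]
  · rw [← ENat.toNat_one, ← ENat.toNat_add h ENat.one_ne_top]
    exact ENat.toNat_le_toNat (idxR_le_idxR_add_one hxy) (by simpa using h)

theorem lt_toNat_idxR_mul_of_closedEBall_subset {r : ℝ≥0∞} (hr : Metric.closedEBall x r ⊆ U)
    (h : idxR R x U ≠ ⊤) : r < (idxR R x U).toNat * ENNReal.ofReal R := by
  obtain ⟨z, hz, hxz⟩ := (hasChain_toNat_idxR h).exists_notMem_edist_le
  refine lt_of_not_ge fun hle => hz (hr ?_)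
  rw [Metric.mem_closedEBall']
  exact hxz.trans hle

end Index

section Weight

variable {X S : Type} [PseudoEMetricSpace X] {R : ℝ} {V : S → Set X} {x y : X}

open Classical in
/-- The weight of `V s` at `x`, of which `phiV R V s x` is the normalization: the index of `x` in
`V s` or, when the index of `x` in some member of `V` is infinite, the indicator of the index in
`V s` being infinite. -/
noncomputable def idxWeight (R : ℝ) (V : S → Set X) (x : X) (s : S) : ℝ :=
  if ∀ t, idxR R x (V t) ≠ ⊤ then (idxR R x (V s)).toNat
  else if idxR R x (V s) = ⊤ then 1 else 0

theorem idxWeight_of_forall_ne_top (h : ∀ t, idxR R x (V t) ≠ ⊤) :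
    idxWeight R V x = fun s => ((idxR R x (V s)).toNat : ℝ) :=
  funext fun _ => if_pos h

theorem idxWeight_of_exists_eq_top (h : ∃ t, idxR R x (V t) = ⊤) :
    idxWeight R V x = {t | idxR R x (V t) = ⊤}.indicator 1 := by
  classical
  ext s
  simp [idxWeight, h, Set.indicator_apply]

theorem phiV_eq_idxWeight_div_tsum (s : S) :
    phiV R V s x = idxWeight R V x s / ∑' t, idxWeight R V x t := by
  by_cases h : ∀ t, idxR R x (V t) ≠ ⊤
  · simp only [phiV, if_pos h, idxWeight_of_forall_ne_top h]
  · have hncard : ∑' t, {t | idxR R x (V t) = ⊤}.indicator (1 : S → ℝ) t =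
        {t | idxR R x (V t) = ⊤}.ncard := by
      simp [← tsum_subtype, Set.ncard_def]
    rw [idxWeight_of_exists_eq_top (by simpa using h), hncard]
    simp only [phiV, if_neg h, Set.indicator_apply]
    split_ifs <;> simp_all

theorem idxWeight_nonneg (s : S) : 0 ≤ idxWeight R V x s := by
  unfold idxWeight
  split_ifs <;> positivity

theorem support_idxWeight_subset : Function.support (idxWeight R V x) ⊆ {s | x ∈ V s} := by
  refine Function.support_subset_iff'.2 fun s hs => ?_
  have h0 : idxR R x (V s) = 0 := idxR_eq_zero_iff.2 hs
  simp [idxWeight, h0]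

theorem summable_idxWeight (hfin : {s | x ∈ V s}.Finite) : Summable (idxWeight R V x) :=
  summable_of_hasFiniteSupport (hfin.subset support_idxWeight_subset)

theorem exists_idxWeight_pos (hx : ∃ s, x ∈ V s) : ∃ s, 0 < idxWeight R V x s := by
  by_cases h : ∀ t, idxR R x (V t) ≠ ⊤
  · obtain ⟨s, hs⟩ := hx
    have hne : idxR R x (V s) ≠ 0 := fun h0 => idxR_eq_zero_iff.1 h0 hs
    rw [idxWeight_of_forall_ne_top h]
    exact ⟨s, Nat.cast_pos.2 (ENat.toNat_pos hne (h s))⟩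
  · push Not at h
    obtain ⟨s, hs⟩ := h
    exact ⟨s, by simp [idxWeight_of_exists_eq_top ⟨s, hs⟩, hs]⟩

theorem tsum_idxWeight_pos (hfin : {s | x ∈ V s}.Finite) (hx : ∃ s, x ∈ V s) :
    0 < ∑' s, idxWeight R V x s := by
  obtain ⟨s, hs⟩ := exists_idxWeight_pos hx
  exact (summable_idxWeight hfin).tsum_pos idxWeight_nonneg s hs

theorem idxWeight_eq_of_edist_le (hxy : edist x y ≤ ENNReal.ofReal R)
    (h : ∃ t, idxR R x (V t) = ⊤) : idxWeight R V x = idxWeight R V y := by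
  have htop (t : S) := idxR_eq_top_iff_of_edist_le (U := V t) hxy
  rw [idxWeight_of_exists_eq_top h, idxWeight_of_exists_eq_top (by simpa only [htop] using h)]
  simp only [htop]

theorem abs_idxWeight_sub_le_one (hxy : edist x y ≤ ENNReal.ofReal R) (s : S) :
    |idxWeight R V x s - idxWeight R V y s| ≤ 1 := by
  by_cases h : ∀ t, idxR R x (V t) ≠ ⊤
  · have hy (t : S) : idxR R y (V t) ≠ ⊤ := (idxR_eq_top_iff_of_edist_le hxy).not.1 (h t)
    have hle : ((idxR R x (V s)).toNat : ℝ) ≤ (idxR R y (V s)).toNat + 1 := by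
      exact_mod_cast toNat_idxR_le_toNat_idxR_add_one hxy
    have hge : ((idxR R y (V s)).toNat : ℝ) ≤ (idxR R x (V s)).toNat + 1 := by
      exact_mod_cast toNat_idxR_le_toNat_idxR_add_one (edist_comm x y ▸ hxy)
    rw [idxWeight_of_forall_ne_top h, idxWeight_of_forall_ne_top hy, abs_le]
    constructor <;> linarith
  · simp [idxWeight_eq_of_edist_le hxy (by simpa using h)]

theorem tsum_abs_idxWeight_sub_le (hxy : edist x y ≤ ENNReal.ofReal R)
    (hx : {s | x ∈ V s}.Finite) (hy : {s | y ∈ V s}.Finite) :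
    ∑' s, |idxWeight R V x s - idxWeight R V y s| ≤
      {s | x ∈ V s}.ncard + {s | y ∈ V s}.ncard := by
  have hsupp : (Function.support fun s => |idxWeight R V x s - idxWeight R V y s|) ⊆
      {s | x ∈ V s} ∪ {s | y ∈ V s} :=
    calc (Function.support fun s => |idxWeight R V x s - idxWeight R V y s|)
        ⊆ Function.support fun s => idxWeight R V x s - idxWeight R V y s :=
          Function.support_comp_subset abs_zero _
      _ ⊆ {s | x ∈ V s} ∪ {s | y ∈ V s} := (Function.support_sub _ _).trans
          (Set.union_subset_union support_idxWeight_subset support_idxWeight_subset)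
  calc ∑' s, |idxWeight R V x s - idxWeight R V y s|
      ≤ ({s | x ∈ V s} ∪ {s | y ∈ V s}).ncard • (1 : ℝ) :=
        tsum_le_ncard_nsmul (hx.union hy) hsupp fun s _ => abs_idxWeight_sub_le_one hxy s
    _ ≤ {s | x ∈ V s}.ncard + {s | y ∈ V s}.ncard := by
        rw [nsmul_one]
        exact_mod_cast Set.ncard_union_le _ _

theorem lt_tsum_idxWeight_mul_of_closedEBall_subset (hR : 0 ≤ R) (hfin : {s | x ∈ V s}.Finite)
    (htop : ∀ t, idxR R x (V t) ≠ ⊤) {r : ℝ} {s : S}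
    (hr : Metric.closedEBall x (ENNReal.ofReal r) ⊆ V s) :
    r < (∑' t, idxWeight R V x t) * R := by
  have hlt : r < idxWeight R V x s * R := by
    have h := lt_toNat_idxR_mul_of_closedEBall_subset hr (htop s)
    rw [← ENNReal.ofReal_natCast, ← ENNReal.ofReal_mul (Nat.cast_nonneg _)] at h
    rw [idxWeight_of_forall_ne_top htop]
    exact (ENNReal.ofReal_lt_ofReal_iff'.1 h).1
  calc r < idxWeight R V x s * R := hlt
    _ ≤ (∑' t, idxWeight R V x t) * R := by
        gcongr
        exact (summable_idxWeight hfin).le_tsum s fun t _ => idxWeight_nonneg t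

end Weight

section PartitionOfUnity

variable {X S : Type} [PseudoEMetricSpace X] {R : ℝ} {V : S → Set X} {x y : X}

theorem phiV_nonneg (s : S) : 0 ≤ phiV R V s x := by
  rw [phiV_eq_idxWeight_div_tsum]
  exact div_nonneg (idxWeight_nonneg s) (tsum_nonneg idxWeight_nonneg)

theorem hasSum_phiV (hfin : {s | x ∈ V s}.Finite) (hx : ∃ s, x ∈ V s) :
    HasSum (fun s => phiV R V s x) 1 := by
  simp only [phiV_eq_idxWeight_div_tsum]
  rw [← div_self (tsum_idxWeight_pos (R := R) hfin hx).ne']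
  exact (summable_idxWeight hfin).hasSum.div_const _

theorem phiV_le_one (hfin : {s | x ∈ V s}.Finite) (hx : ∃ s, x ∈ V s) (s : S) :
    phiV R V s x ≤ 1 :=
  le_hasSum (hasSum_phiV hfin hx) s fun t _ => phiV_nonneg t

theorem phiV_eq_of_edist_le (hxy : edist x y ≤ ENNReal.ofReal R)
    (h : ∃ t, idxR R x (V t) = ⊤) (s : S) : phiV R V s x = phiV R V s y := by
  simp only [phiV_eq_idxWeight_div_tsum, idxWeight_eq_of_edist_le hxy h]

theorem tsum_abs_phiV_sub_le (hxy : edist x y ≤ ENNReal.ofReal R)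
    (hxfin : {s | x ∈ V s}.Finite) (hyfin : {s | y ∈ V s}.Finite)
    (hx : ∃ s, x ∈ V s) (hy : ∃ s, y ∈ V s) :
    ∑' s, |phiV R V s x - phiV R V s y| ≤
      2 * ({s | x ∈ V s}.ncard + {s | y ∈ V s}.ncard) / ∑' s, idxWeight R V x s := by
  have hpos : 0 < ∑' s, idxWeight R V x s := tsum_idxWeight_pos hxfin hx
  simp only [phiV_eq_idxWeight_div_tsum]
  calc _ ≤ 2 * (∑' s, |idxWeight R V x s - idxWeight R V y s|) / ∑' s, idxWeight R V x s :=
        tsum_abs_div_tsum_sub_div_tsum_le (summable_idxWeight hxfin) (summable_idxWeight hyfin)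
          idxWeight_nonneg hpos (tsum_idxWeight_pos hyfin hy)
    _ ≤ 2 * ({s | x ∈ V s}.ncard + {s | y ∈ V s}.ncard) / ∑' s, idxWeight R V x s := by
        gcongr
        exact tsum_abs_idxWeight_sub_le hxy hxfin hyfin

end PartitionOfUnity

/-- If `𝒱 = {V_s}` is a cover of an ∞-pseudo-metric space `X` of multiplicity
at most `m` and Lebesgue number at least `4mR/ε`, then `φ_R^𝒱` is a well-defined partition
of unity on `X` which is `(ε,R)`-continuous. -/
theorem stmt2 {X S : Type} [PseudoEMetricSpace X] (m : ℕ) (hm : 0 < m)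
    (R ε : ℝ) (hR : 0 < R) (hε : 0 < ε) (V : S → Set X)
    (hcover : ∀ x : X, ∃ s, x ∈ V s)
    (hmult : ∀ x : X, {s | x ∈ V s}.Finite ∧ {s | x ∈ V s}.ncard ≤ m)
    (hleb : ∀ x : X, ∃ s, EMetric.closedBall x (ENNReal.ofReal (4 * m * R / ε)) ⊆ V s) :
    (∀ s x, 0 ≤ phiV R V s x ∧ phiV R V s x ≤ 1) ∧
    (∀ x, HasSum (fun s => phiV R V s x) 1) ∧
    (∀ x y : X, edist x y ≤ ENNReal.ofReal R →
      (∑' s, |phiV R V s x - phiV R V s y|) ≤ ε) := by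
  refine ⟨fun s x => ⟨phiV_nonneg s, phiV_le_one (hmult x).1 (hcover x) s⟩,
    fun x => hasSum_phiV (hmult x).1 (hcover x), fun x y hxy => ?_⟩
  by_cases htop : ∀ t, idxR R x (V t) ≠ ⊤
  · obtain ⟨s, hs⟩ := hleb x
    have hlt : 4 * m * R / ε < (∑' s, idxWeight R V x s) * R :=
      lt_tsum_idxWeight_mul_of_closedEBall_subset hR.le (hmult x).1 htop hs
    have hlarge : 4 * m / ε < ∑' s, idxWeight R V x s :=
      lt_of_mul_lt_mul_right (by rwa [div_mul_eq_mul_div]) hR.le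
    have hncard (z : X) : ({s | z ∈ V s}.ncard : ℝ) ≤ m := Nat.cast_le.2 (hmult z).2
    calc ∑' s, |phiV R V s x - phiV R V s y|
        ≤ 2 * ({s | x ∈ V s}.ncard + {s | y ∈ V s}.ncard) / ∑' s, idxWeight R V x s :=
          tsum_abs_phiV_sub_le hxy (hmult x).1 (hmult y).1 (hcover x) (hcover y)
      _ ≤ ε := div_le_of_le_mul₀ (tsum_nonneg idxWeight_nonneg) hε.le (by
          linarith [hncard x, hncard y, (div_lt_iff₀' hε).1 hlarge])
  · simpa [phiV_eq_of_edist_le hxy (not_forall_not.1 htop)] using hε.le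
end

section
/- Let X be an ∞-pseudo-metric space. If for each R > 0, X can be expressed as a finite union X = ⋃_{i=1}^m X_i where each X_i is the union of an R-disjoint family of uniformly bounded subsets of X, then for every R > 0 there is a point-finite partition of unity on X whose strata are uniformly bounded and whose family of strata has Lebesgue number at least R. -/
open scoped ENNReal

/-! Enlarge every member of an `r`-disjoint family by `r / 2`. The enlargements stay disjoint by the
triangle inequality, so with finitely many families each point lies in only finitely many
enlargements, and one may spread the unit mass evenly over those containing the point. A ball of
radius `R < r / 2` centred in a member lies in the enlargement of that member. -/

section UniformPartition

variable {S X : Type*} {U : S → Set X}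

/-- The partition of unity on `X` subordinate to a point-finite cover `U`, which gives equal weight
at `x` to all the members of `U` that contain `x`. At a point contained in infinitely many
members all weights are `0`, as `Set.ncard` is `0` there. -/
noncomputable def uniformPartition (U : S → Set X) (s : S) : X → ℝ :=
  (U s).indicator fun x => ({t | x ∈ U t}.ncard : ℝ)⁻¹

theorem uniformPartition_mem_Icc (U : S → Set X) (s : S) (x : X) :
    uniformPartition U s x ∈ Set.Icc 0 1 :=
  ⟨Set.indicator_nonneg (fun _ _ => by positivity) x,
    Set.indicator_apply_le' (fun _ => Nat.cast_inv_le_one _) fun _ => zero_le_one⟩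

theorem uniformPartition_pos_iff {s : S} {x : X} (hfin : {t | x ∈ U t}.Finite) :
    0 < uniformPartition U s x ↔ x ∈ U s := by
  refine ⟨fun h => Set.mem_of_indicator_ne_zero h.ne', fun hx => ?_⟩
  have hcard : 0 < {t | x ∈ U t}.ncard := (Set.ncard_pos hfin).2 ⟨s, hx⟩
  rw [uniformPartition, Set.indicator_of_mem hx]
  positivity

theorem hasSum_uniformPartition {x : X} (hfin : {t | x ∈ U t}.Finite) (hcov : ∃ t, x ∈ U t) :
    HasSum (fun s => uniformPartition U s x) 1 := by
  have hcard : ({t | x ∈ U t}.ncard : ℝ) ≠ 0 := Nat.cast_ne_zero.2 ((Set.ncard_pos hfin).2 hcov).ne'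
  have hsum : ∑ s ∈ hfin.toFinset, uniformPartition U s x = 1 :=
    calc ∑ s ∈ hfin.toFinset, uniformPartition U s x
        = ∑ _s ∈ hfin.toFinset, ({t | x ∈ U t}.ncard : ℝ)⁻¹ :=
          Finset.sum_congr rfl fun s hs =>
            Set.indicator_of_mem (show x ∈ U s from hfin.mem_toFinset.1 hs) _
      _ = 1 := by
          rw [Finset.sum_const, nsmul_eq_mul, ← Set.ncard_eq_toFinset_card _ hfin,
            mul_inv_cancel₀ hcard]
  exact hsum ▸ hasSum_sum_of_ne_finset_zero fun s hs =>
    Set.indicator_of_notMem (fun hx : x ∈ U s => hs (hfin.mem_toFinset.2 hx)) _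

end UniformPartition

theorem finite_setOf_mem_of_pairwiseDisjoint {ι α X : Type*} [Finite ι] {F : ι → Set α}
    {U : α → Set X} (hU : ∀ i, (F i).PairwiseDisjoint U) (x : X) :
    {s : Σ i, F i | x ∈ U s.2}.Finite := by
  refine Set.Finite.of_injOn (Set.mapsTo_univ Sigma.fst _) ?_ Set.finite_univ
  rintro ⟨i, A⟩ hxA ⟨_, B⟩ hxB rfl
  exact congrArg _ (Subtype.ext ((hU i).elim_set A.2 B.2 x hxA hxB))

section Thickening

variable {X : Type*} [PseudoEMetricSpace X]

/-- A family of sets is `r`-disjoint if points of distinct members are at distance at least `r`.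
This is the separation asked of the pieces of each `X_i`; as the family is a set of sets, repeated
members are identified. -/
def IsRDisjoint (r : ℝ) (F : Set (Set X)) : Prop :=
  F.Pairwise fun A B => ∀ x ∈ A, ∀ y ∈ B, ENNReal.ofReal r ≤ edist x y

theorem IsRDisjoint.pairwiseDisjoint_thickening {r : ℝ} {F : Set (Set X)} (hF : IsRDisjoint r F) :
    F.PairwiseDisjoint (Metric.thickening (r / 2)) := by
  intro A hA B hB hAB
  refine Set.disjoint_left.2 fun x hxA hxB => ?_
  obtain ⟨a, ha, hxa⟩ := (Metric.mem_thickening_iff_exists_edist_lt A x).1 hxA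
  obtain ⟨b, hb, hxb⟩ := (Metric.mem_thickening_iff_exists_edist_lt B x).1 hxB
  have hr : 0 < r / 2 := ENNReal.ofReal_pos.1 (pos_of_gt hxa)
  refine (hF hA hB hAB a ha b hb).not_gt ?_
  calc edist a b ≤ edist x a + edist x b := edist_triangle_left a b x
    _ < ENNReal.ofReal (r / 2) + ENNReal.ofReal (r / 2) := ENNReal.add_lt_add hxa hxb
    _ = ENNReal.ofReal r := by rw [← ENNReal.ofReal_add hr.le hr.le, add_halves]

theorem ediam_thickening_le_ofReal {A : Set X} {D δ : ℝ} (hD : 0 ≤ D) (hδ : 0 ≤ δ)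
    (hA : Metric.ediam A ≤ ENNReal.ofReal D) :
    Metric.ediam (Metric.thickening δ A) ≤ ENNReal.ofReal (D + 2 * δ) := by
  lift δ to NNReal using hδ
  calc Metric.ediam (Metric.thickening δ A)
      ≤ Metric.ediam A + 2 * δ := Metric.ediam_thickening_le δ
    _ ≤ ENNReal.ofReal D + 2 * δ := by gcongr
    _ = ENNReal.ofReal (D + 2 * δ) := by
        rw [ENNReal.ofReal_add hD (by positivity), ENNReal.ofReal_mul zero_le_two,
          ENNReal.ofReal_ofNat, ENNReal.ofReal_coe_nnreal]

theorem closedEBall_subset_thickening {A : Set X} {x : X} {R δ : ℝ} (hx : x ∈ A) (hR : 0 ≤ R)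
    (hRδ : R < δ) : Metric.closedEBall x (ENNReal.ofReal R) ⊆ Metric.thickening δ A :=
  fun y hy => (Metric.mem_thickening_iff_exists_edist_lt A y).2
    ⟨x, hx, hy.trans_lt ((ENNReal.ofReal_lt_ofReal_iff_of_nonneg hR).2 hRδ)⟩

end Thickening

theorem stmt3_general.{u, v} {X : Type u} [PseudoEMetricSpace X] {ι : Type v} [Finite ι]
    {F : ι → Set (Set X)} {R r D : ℝ} (hR : 0 ≤ R) (hRr : 2 * R < r) (hD : 0 ≤ D)
    (hcov : (⋃ i, ⋃₀ F i) = Set.univ) (hdis : ∀ i, IsRDisjoint r (F i))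
    (hdiam : ∀ i, ∀ A ∈ F i, Metric.ediam A ≤ ENNReal.ofReal D) :
    ∃ (S : Type (max u v)) (φ : S → X → ℝ),
      (∀ s x, 0 ≤ φ s x ∧ φ s x ≤ 1) ∧
      (∀ x, HasSum (fun s => φ s x) 1) ∧
      (∀ x : X, {s | 0 < φ s x}.Finite) ∧
      (∃ D' : ℝ, 0 < D' ∧ ∀ s, Metric.ediam {x | 0 < φ s x} ≤ ENNReal.ofReal D') ∧
      (∀ x : X, ∃ s, Metric.closedEBall x (ENNReal.ofReal R) ⊆ {x' | 0 < φ s x'}) := by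
  let U : (Σ i, F i) → Set X := fun s => Metric.thickening (r / 2) s.2
  have hfin (x : X) : {s | x ∈ U s}.Finite :=
    finite_setOf_mem_of_pairwiseDisjoint (fun i => (hdis i).pairwiseDisjoint_thickening) x
  have hball (x : X) : ∃ s, Metric.closedEBall x (ENNReal.ofReal R) ⊆ U s := by
    obtain ⟨i, A, hA, hxA⟩ := Set.mem_iUnion.1 (hcov ▸ Set.mem_univ x)
    exact ⟨⟨i, A, hA⟩, closedEBall_subset_thickening hxA hR (by linarith)⟩
  have hstratum (s : Σ i, F i) : {x | 0 < uniformPartition U s x} = U s :=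
    Set.ext fun x => uniformPartition_pos_iff (hfin x)
  refine ⟨Σ i, F i, uniformPartition U, uniformPartition_mem_Icc U, fun x => ?_, fun x => ?_,
    ⟨D + 2 * (r / 2), by linarith, fun s => ?_⟩, fun x => ?_⟩
  · exact hasSum_uniformPartition (hfin x) <|
      (hball x).imp fun s hs => hs Metric.mem_closedEBall_self
  · simpa only [uniformPartition_pos_iff (hfin x)] using hfin x
  · rw [hstratum]
    exact ediam_thickening_le_ofReal hD (by linarith) (hdiam s.1 s.2 s.2.2)
  · simpa only [hstratum] using hball x

/-- If for each `R > 0` the ∞-pseudo-metric space `X` is a finite union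
`X = ⋃_{i=1}^m X_i` with each `X_i` the union of an `R`-disjoint uniformly bounded family,
then for every `R > 0` there is a point-finite partition of unity on `X` whose strata are
uniformly bounded and form a family of Lebesgue number at least `R`. -/
theorem stmt3 {X : Type} [PseudoEMetricSpace X]
    (hdec : ∀ R : ℝ, 0 < R → ∃ (m : ℕ) (F : Fin m → Set (Set X)) (D : ℝ), 0 < D ∧
      (⋃ i, ⋃₀ F i) = Set.univ ∧
      (∀ i, ∀ A ∈ F i, ∀ B ∈ F i, A ≠ B → ∀ x ∈ A, ∀ y ∈ B,
        ENNReal.ofReal R ≤ edist x y) ∧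
      (∀ i, ∀ A ∈ F i, EMetric.diam A ≤ ENNReal.ofReal D)) :
    ∀ R : ℝ, 0 < R → ∃ (S : Type) (φ : S → X → ℝ),
      (∀ s x, 0 ≤ φ s x ∧ φ s x ≤ 1) ∧
      (∀ x, HasSum (fun s => φ s x) 1) ∧
      (∀ x : X, {s | 0 < φ s x}.Finite) ∧
      (∃ D : ℝ, 0 < D ∧ ∀ s, EMetric.diam {x | 0 < φ s x} ≤ ENNReal.ofReal D) ∧
      (∀ x : X, ∃ s, EMetric.closedBall x (ENNReal.ofReal R) ⊆ {x' | 0 < φ s x'}) := by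
  intro R hR
  obtain ⟨m, F, D, hD, hcov, hdis, hdiam⟩ := hdec (3 * R) (by positivity)
  exact stmt3_general hR.le (by linarith) hD.le hcov (fun i _ hA _ hB => hdis i _ hA _ hB) hdiam
end

section
/- Let X be an ∞-pseudo-metric space. Suppose that (a) X is exact, and (b) for every R > 0 there is a point-finite partition of unity on X whose strata are uniformly bounded and whose family of strata has Lebesgue number at least R. Then for every R, ε > 0 there is a point-finite (ε,R)-continuous partition of unity on X whose strata are uniformly bounded and whose family of strata has Lebesgue number at least R. -/
open scoped ENNReal

/-!
Let `φ` be an `(ε', R)`-continuous partition of unity with `ε' < ε` and strata of diameter at most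
`D`, and let `ψ` be a partition of unity whose strata have Lebesgue number at least `D`. Each
stratum of `φ` lies in a stratum of `ψ`, so the functions `φ s` can be summed along a refinement
map `f` between the index sets. This gives a partition of unity `f_* φ` subordinate to the strata
of `ψ`, and since summing over fibres does not increase `ℓ¹`-distances, it is as continuous as `φ`.
Any two values of `ψ` are at `ℓ¹`-distance at most `2`, so for small `δ > 0` the mixture
`(1 - δ) f_* φ + δ ψ` is `(ε, R)`-continuous, while its strata are exactly those of `ψ`.
-/

universe u v w

section L1

variable {ι κ E : Type*} [SeminormedAddCommGroup E]

theorem tsum_norm_tsum_fiber_le {a : ι → E} (ha : Summable fun i => ‖a i‖) (f : ι → κ) :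
    ∑' k, ‖∑' i : f ⁻¹' {k}, a i‖ ≤ ∑' i, ‖a i‖ := by
  have hfib : HasSum (fun k => ∑' i : f ⁻¹' {k}, ‖a i‖) (∑' i, ‖a i‖) :=
    ha.hasSum.tsum_fiberwise f
  have hle (k : κ) : ‖∑' i : f ⁻¹' {k}, a i‖ ≤ ∑' i : f ⁻¹' {k}, ‖a i‖ :=
    norm_tsum_le_tsum_norm (ha.subtype _)
  calc ∑' k, ‖∑' i : f ⁻¹' {k}, a i‖
      ≤ ∑' k, ∑' i : f ⁻¹' {k}, ‖a i‖ :=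
        (hfib.summable.of_nonneg_of_le (fun _ => norm_nonneg _) hle).tsum_le_tsum hle hfib.summable
    _ = ∑' i, ‖a i‖ := hfib.tsum_eq

theorem tsum_norm_add_le {a b : ι → E} (ha : Summable fun i => ‖a i‖)
    (hb : Summable fun i => ‖b i‖) :
    ∑' i, ‖a i + b i‖ ≤ ∑' i, ‖a i‖ + ∑' i, ‖b i‖ := by
  have hle (i : ι) : ‖a i + b i‖ ≤ ‖a i‖ + ‖b i‖ := norm_add_le _ _
  calc ∑' i, ‖a i + b i‖
      ≤ ∑' i, (‖a i‖ + ‖b i‖) :=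
        ((ha.add hb).of_nonneg_of_le (fun _ => norm_nonneg _) hle).tsum_le_tsum hle (ha.add hb)
    _ = ∑' i, ‖a i‖ + ∑' i, ‖b i‖ := ha.tsum_add hb

end L1

section Families

variable {X : Type u} {S : Type v} {T : Type w}

/-- A partition of unity on `X` indexed by `S`, as a family of real functions; no continuity is
required, and the bound `φ s x ≤ 1` is automatic (`IsPartitionOfUnity.le_one`). -/
structure IsPartitionOfUnity (φ : S → X → ℝ) : Prop where
  nonneg : ∀ s x, 0 ≤ φ s x
  hasSum : ∀ x, HasSum (fun s => φ s x) 1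

/-- The stratum of the family `φ` at the index `s`, that is `φ_s⁻¹((0, 1])` for a partition of
unity. -/
def stratum (φ : S → X → ℝ) (s : S) : Set X :=
  {x | 0 < φ s x}

/-- The family indexed by `T` obtained from `φ` by summing over the fibres of `f`; for a partition
of unity, this is the composition of `φ : X → ℓ¹(S)` with the map `ℓ¹(S) → ℓ¹(T)` induced by `f`.
-/
noncomputable def pushforward (f : S → T) (φ : S → X → ℝ) (t : T) (x : X) : ℝ :=
  ∑' s : f ⁻¹' {t}, φ s x

/-- Point-finiteness of a family of subsets: every point belongs to finitely many members, counted
with their indices. -/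
def IsPointFinite (U : S → Set X) : Prop :=
  ∀ x, {s | x ∈ U s}.Finite

namespace IsPartitionOfUnity

variable {φ ψ : S → X → ℝ}

theorem le_one (hφ : IsPartitionOfUnity φ) (s : S) (x : X) : φ s x ≤ 1 :=
  le_hasSum (hφ.hasSum x) s fun t _ => hφ.nonneg t x

theorem summable (hφ : IsPartitionOfUnity φ) (x : X) : Summable fun s => φ s x :=
  (hφ.hasSum x).summable

theorem tsum_abs_sub_le_two (hφ : IsPartitionOfUnity φ) (x y : X) :
    ∑' s, |φ s x - φ s y| ≤ 2 := by
  have hsum : HasSum (fun s => φ s x + φ s y) (1 + 1) := (hφ.hasSum x).add (hφ.hasSum y)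
  have hle (s : S) : |φ s x - φ s y| ≤ φ s x + φ s y := by
    simpa only [abs_of_nonneg (hφ.nonneg s _)] using abs_sub (φ s x) (φ s y)
  calc ∑' s, |φ s x - φ s y|
      ≤ ∑' s, (φ s x + φ s y) :=
        ((hφ.summable x).sub (hφ.summable y)).abs.tsum_le_tsum hle hsum.summable
    _ = 2 := hsum.tsum_eq.trans one_add_one_eq_two

theorem pushforward (hφ : IsPartitionOfUnity φ) (f : S → T) :
    IsPartitionOfUnity (pushforward f φ) where
  nonneg _ x := tsum_nonneg fun s => hφ.nonneg s x
  hasSum x := (hφ.hasSum x).tsum_fiberwise f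

theorem smul_add_smul (hφ : IsPartitionOfUnity φ) (hψ : IsPartitionOfUnity ψ) {a b : ℝ}
    (ha : 0 ≤ a) (hb : 0 ≤ b) (hab : a + b = 1) : IsPartitionOfUnity (a • φ + b • ψ) where
  nonneg s x := add_nonneg (mul_nonneg ha (hφ.nonneg s x)) (mul_nonneg hb (hψ.nonneg s x))
  hasSum x := by
    have h := ((hφ.hasSum x).mul_left a).add ((hψ.hasSum x).mul_left b)
    rwa [mul_one, mul_one, hab] at h

end IsPartitionOfUnity

theorem isPartitionOfUnity_iff {φ : S → X → ℝ} :
    IsPartitionOfUnity φ ↔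
      (∀ s x, 0 ≤ φ s x ∧ φ s x ≤ 1) ∧ ∀ x, HasSum (fun s => φ s x) 1 :=
  ⟨fun h => ⟨fun s x => ⟨h.nonneg s x, h.le_one s x⟩, h.hasSum⟩,
    fun h => ⟨fun s x => (h.1 s x).1, h.2⟩⟩

theorem pushforward_sub_pushforward {φ : S → X → ℝ} (hφ : ∀ x, Summable fun s => φ s x) (f : S → T)
    (t : T) (x y : X) :
    pushforward f φ t x - pushforward f φ t y = ∑' s : f ⁻¹' {t}, (φ s x - φ s y) :=
  (((hφ x).subtype _).tsum_sub ((hφ y).subtype _)).symm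

theorem stratum_pushforward_subset {φ : S → X → ℝ} {f : S → T} {U : T → Set X}
    (hf : ∀ s, stratum φ s ⊆ U (f s)) (t : T) : stratum (pushforward f φ) t ⊆ U t := by
  intro x hx
  obtain ⟨⟨s, rfl⟩, hs⟩ : ∃ s : f ⁻¹' {t}, 0 < φ s x := by
    by_contra! h
    exact (tsum_nonpos h).not_gt hx
  exact hf s hs

theorem stratum_smul_add_smul {φ ψ : S → X → ℝ} (hφ : ∀ s x, 0 ≤ φ s x)
    (hsub : ∀ s, stratum φ s ⊆ stratum ψ s) {a b : ℝ} (ha : 0 ≤ a) (hb : 0 < b) :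
    stratum (a • φ + b • ψ) = stratum ψ := by
  ext s x
  refine ⟨fun hx => ?_, fun hx => ?_⟩
  · by_contra hψ
    have hφx : φ s x ≤ 0 := not_lt.mp fun h => hψ (hsub s h)
    exact (add_nonpos (mul_nonpos_of_nonneg_of_nonpos ha hφx)
      (mul_nonpos_of_nonneg_of_nonpos hb.le (not_lt.mp hψ))).not_gt hx
  · exact add_pos_of_nonneg_of_pos (mul_nonneg ha (hφ s x)) (mul_pos hb hx)

end Families

section Metric

variable {X : Type u} [PseudoEMetricSpace X] {S : Type v} {T : Type w}

/-- `(ε, R)`-continuity of a partition of unity `φ`, with respect to the `ℓ¹`-norm on the values.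
The series is `0` by convention when it diverges, which does not happen for partitions of unity. -/
def IsScaleContinuous (ε : ℝ) (R : ℝ≥0∞) (φ : S → X → ℝ) : Prop :=
  ∀ x y, edist x y ≤ R → ∑' s, |φ s x - φ s y| ≤ ε

/-- Uniform boundedness of a family of subsets, by a bound that is real and hence finite. -/
def IsUniformlyBounded (U : S → Set X) : Prop :=
  ∃ D : ℝ, 0 < D ∧ ∀ s, Metric.ediam (U s) ≤ ENNReal.ofReal D

/-- The family `U` has Lebesgue number at least `R`, with closed balls as the balls `B(x, R)`. -/
def HasLebesgueNumber (R : ℝ≥0∞) (U : S → Set X) : Prop :=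
  ∀ x, ∃ s, Metric.closedEBall x R ⊆ U s

/-- Exactness of `X`, with partitions of unity indexed by types in the universe `v`. -/
def IsExact (X : Type u) [PseudoEMetricSpace X] : Prop :=
  ∀ R ε : ℝ, 0 < R → 0 < ε → ∃ (S : Type v) (φ : S → X → ℝ),
    IsPartitionOfUnity φ ∧ IsScaleContinuous ε (ENNReal.ofReal R) φ ∧
      IsUniformlyBounded (stratum φ)

theorem HasLebesgueNumber.anti {R R' : ℝ≥0∞} {U : S → Set X} (hU : HasLebesgueNumber R U)
    (h : R' ≤ R) : HasLebesgueNumber R' U := fun x =>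
  (hU x).imp fun _ hs => (Metric.closedEBall_subset_closedEBall h).trans hs

theorem HasLebesgueNumber.exists_refinement [Nonempty X] {D : ℝ≥0∞} {U : T → Set X}
    (hU : HasLebesgueNumber D U) {V : S → Set X} (hV : ∀ s, Metric.ediam (V s) ≤ D) :
    ∃ f : S → T, ∀ s, V s ⊆ U (f s) := by
  suffices ∀ s, ∃ t, V s ⊆ U t from Classical.skolem.mp this
  intro s
  rcases (V s).eq_empty_or_nonempty with hempty | ⟨x, hx⟩
  · obtain ⟨t, -⟩ := hU (Classical.arbitrary X)
    exact ⟨t, hempty ▸ Set.empty_subset _⟩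
  · obtain ⟨t, ht⟩ := hU x
    exact ⟨t, fun y hy => ht (Metric.edist_le_of_ediam_le hy hx (hV s))⟩

theorem IsPartitionOfUnity.isScaleContinuous_two {φ : S → X → ℝ} (hφ : IsPartitionOfUnity φ)
    (R : ℝ≥0∞) : IsScaleContinuous 2 R φ :=
  fun x y _ => hφ.tsum_abs_sub_le_two x y

theorem IsScaleContinuous.pushforward {ε : ℝ} {R : ℝ≥0∞} {φ : S → X → ℝ}
    (hcont : IsScaleContinuous ε R φ) (hφ : ∀ x, Summable fun s => φ s x) (f : S → T) :
    IsScaleContinuous ε R (pushforward f φ) := by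
  intro x y hxy
  simp only [pushforward_sub_pushforward hφ]
  exact (tsum_norm_tsum_fiber_le ((hφ x).sub (hφ y)).norm f).trans (hcont x y hxy)

theorem IsScaleContinuous.smul_add_smul {ε₁ ε₂ : ℝ} {R : ℝ≥0∞} {φ ψ : S → X → ℝ}
    (hφc : IsScaleContinuous ε₁ R φ) (hψc : IsScaleContinuous ε₂ R ψ)
    (hφ : ∀ x, Summable fun s => φ s x) (hψ : ∀ x, Summable fun s => ψ s x) {a b : ℝ}
    (ha : 0 ≤ a) (hb : 0 ≤ b) :
    IsScaleContinuous (a * ε₁ + b * ε₂) R (a • φ + b • ψ) := by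
  intro x y hxy
  have hscale {c : ℝ} (hc : 0 ≤ c) (r : ℝ) : ‖c * r‖ = c * ‖r‖ := by
    rw [norm_mul, Real.norm_of_nonneg hc]
  have hsub (s : S) : (a • φ + b • ψ) s x - (a • φ + b • ψ) s y =
      a * (φ s x - φ s y) + b * (ψ s x - ψ s y) := by
    simp only [Pi.add_apply, Pi.smul_apply, smul_eq_mul]
    ring
  simp only [hsub]
  calc ∑' s, ‖a * (φ s x - φ s y) + b * (ψ s x - ψ s y)‖
      ≤ ∑' s, ‖a * (φ s x - φ s y)‖ + ∑' s, ‖b * (ψ s x - ψ s y)‖ :=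
        tsum_norm_add_le (((hφ x).sub (hφ y)).mul_left a).norm
          (((hψ x).sub (hψ y)).mul_left b).norm
    _ = a * ∑' s, ‖φ s x - φ s y‖ + b * ∑' s, ‖ψ s x - ψ s y‖ := by
        simp only [hscale ha, hscale hb, tsum_mul_left]
    _ ≤ a * ε₁ + b * ε₂ :=
        add_le_add (mul_le_mul_of_nonneg_left (hφc x y hxy) ha)
          (mul_le_mul_of_nonneg_left (hψc x y hxy) hb)

theorem IsScaleContinuous.mono {ε ε' : ℝ} {R : ℝ≥0∞} {φ : S → X → ℝ}
    (hφ : IsScaleContinuous ε' R φ) (h : ε' ≤ ε) : IsScaleContinuous ε R φ :=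
  fun x y hxy => (hφ x y hxy).trans h

theorem exists_isScaleContinuous_stratum_eq {ε ε' : ℝ} {R D : ℝ≥0∞} {φ : S → X → ℝ}
    {ψ : T → X → ℝ} (hφ : IsPartitionOfUnity φ) (hψ : IsPartitionOfUnity ψ)
    (hφc : IsScaleContinuous ε' R φ) (hε : ε' < ε)
    (hD : ∀ s, Metric.ediam (stratum φ s) ≤ D) (hψD : HasLebesgueNumber D (stratum ψ)) :
    ∃ η : T → X → ℝ,
      IsPartitionOfUnity η ∧ IsScaleContinuous ε R η ∧ stratum η = stratum ψ := by
  rcases isEmpty_or_nonempty X with hX | hX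
  · exact ⟨ψ, hψ, fun x => hX.elim x, rfl⟩
  have hε' : 0 ≤ ε' := by
    obtain ⟨x⟩ := hX
    simpa only [sub_self, abs_zero, tsum_zero] using hφc x x (by simp only [edist_self, zero_le])
  obtain ⟨f, hf⟩ := hψD.exists_refinement hD
  obtain ⟨δ, hδ, hδ_one, hδε⟩ : ∃ δ : ℝ, 0 < δ ∧ δ ≤ 1 ∧ δ ≤ (ε - ε') / 2 :=
    ⟨min 1 ((ε - ε') / 2), lt_min one_pos (half_pos (sub_pos.mpr hε)), min_le_left _ _,
      min_le_right _ _⟩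
  have hδ' : 0 ≤ 1 - δ := sub_nonneg.mpr hδ_one
  have hfφ : IsPartitionOfUnity (pushforward f φ) := hφ.pushforward f
  have hηc : IsScaleContinuous ((1 - δ) * ε' + δ * 2) R ((1 - δ) • pushforward f φ + δ • ψ) :=
    (hφc.pushforward hφ.summable f).smul_add_smul (hψ.isScaleContinuous_two R) hfφ.summable
      hψ.summable hδ' hδ.le
  have hbound : (1 - δ) * ε' + δ * 2 ≤ ε := by
    linarith [mul_nonneg hδ.le hε']
  exact ⟨(1 - δ) • pushforward f φ + δ • ψ,
    hfφ.smul_add_smul hψ hδ' hδ.le (sub_add_cancel 1 δ),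
    hηc.mono hbound,
    stratum_smul_add_smul hfφ.nonneg (stratum_pushforward_subset hf) hδ' hδ⟩

end Metric

theorem stmt4_general {X : Type u} [PseudoEMetricSpace X]
    (hexact : IsExact.{u, v} X)
    (hpf : ∀ R : ℝ, 0 < R → ∃ (S : Type w) (φ : S → X → ℝ),
      IsPartitionOfUnity φ ∧ IsPointFinite (stratum φ) ∧ IsUniformlyBounded (stratum φ) ∧
      HasLebesgueNumber (ENNReal.ofReal R) (stratum φ)) :
    ∀ R ε : ℝ, 0 < R → 0 < ε → ∃ (S : Type w) (φ : S → X → ℝ),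
      IsPartitionOfUnity φ ∧ IsPointFinite (stratum φ) ∧
      IsScaleContinuous ε (ENNReal.ofReal R) φ ∧ IsUniformlyBounded (stratum φ) ∧
      HasLebesgueNumber (ENNReal.ofReal R) (stratum φ) := by
  intro R ε hR hε
  obtain ⟨S, φ, hφ, hφc, D, hD, hφD⟩ := hexact R (ε / 2) hR (half_pos hε)
  obtain ⟨T, ψ, hψ, hfin, hbdd, hleb⟩ := hpf (max D R) (lt_max_of_lt_left hD)
  have hlebD : HasLebesgueNumber (ENNReal.ofReal D) (stratum ψ) :=
    hleb.anti (ENNReal.ofReal_le_ofReal (le_max_left D R))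
  have hlebR : HasLebesgueNumber (ENNReal.ofReal R) (stratum ψ) :=
    hleb.anti (ENNReal.ofReal_le_ofReal (le_max_right D R))
  obtain ⟨η, hη, hηc, hstratum⟩ :=
    exists_isScaleContinuous_stratum_eq hφ hψ hφc (half_lt_self hε) hφD hlebD
  rw [← hstratum] at hfin hbdd hlebR
  exact ⟨T, η, hη, hfin, hηc, hbdd, hlebR⟩

/-- If `X` is exact and for every `R > 0` it admits a point-finite partition
of unity with uniformly bounded strata and Lebesgue number at least `R`, then for every
`R, ε > 0` there is a point-finite `(ε,R)`-continuous partition of unity on `X` with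
uniformly bounded strata and Lebesgue number at least `R`. -/
theorem stmt4 {X : Type} [PseudoEMetricSpace X]
    (hexact : ∀ R ε : ℝ, 0 < R → 0 < ε → ∃ (S : Type) (φ : S → X → ℝ),
      (∀ s x, 0 ≤ φ s x ∧ φ s x ≤ 1) ∧
      (∀ x, HasSum (fun s => φ s x) 1) ∧
      (∀ x y : X, edist x y ≤ ENNReal.ofReal R → (∑' s, |φ s x - φ s y|) ≤ ε) ∧
      (∃ D : ℝ, 0 < D ∧ ∀ s, EMetric.diam {x | 0 < φ s x} ≤ ENNReal.ofReal D))
    (hpf : ∀ R : ℝ, 0 < R → ∃ (S : Type) (φ : S → X → ℝ),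
      (∀ s x, 0 ≤ φ s x ∧ φ s x ≤ 1) ∧
      (∀ x, HasSum (fun s => φ s x) 1) ∧
      (∀ x : X, {s | 0 < φ s x}.Finite) ∧
      (∃ D : ℝ, 0 < D ∧ ∀ s, EMetric.diam {x | 0 < φ s x} ≤ ENNReal.ofReal D) ∧
      (∀ x : X, ∃ s, EMetric.closedBall x (ENNReal.ofReal R) ⊆ {x' | 0 < φ s x'})) :
    ∀ R ε : ℝ, 0 < R → 0 < ε → ∃ (S : Type) (φ : S → X → ℝ),
      (∀ s x, 0 ≤ φ s x ∧ φ s x ≤ 1) ∧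
      (∀ x, HasSum (fun s => φ s x) 1) ∧
      (∀ x : X, {s | 0 < φ s x}.Finite) ∧
      (∀ x y : X, edist x y ≤ ENNReal.ofReal R → (∑' s, |φ s x - φ s y|) ≤ ε) ∧
      (∃ D : ℝ, 0 < D ∧ ∀ s, EMetric.diam {x | 0 < φ s x} ≤ ENNReal.ofReal D) ∧
      (∀ x : X, ∃ s, EMetric.closedBall x (ENNReal.ofReal R) ⊆ {x' | 0 < φ s x'}) := by
  have h := stmt4_general.{0, 0, 0} (X := X)
  simp only [IsExact, isPartitionOfUnity_iff, and_assoc] at h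
  exact h hexact hpf
end

section
/- Let W be the wedge of two copies of the real line at the basepoint 0, i.e., W = ℝ × {0,1} with metric d((a,i),(b,j)) = |a − b| if i = j and d((a,i),(b,j)) = |a| + |b| if i ≠ j. Then there is no coarse embedding of W into ℝ. -/
/-- A coarse embedding with respect to given distance functions: there are non-decreasing
`ρ₋, ρ₊` with `ρ₋ → ∞` such that `ρ₋(d(x,y)) ≤ d(f x, f y) ≤ ρ₊(d(x,y))`. -/
def CoarseEmbedD {Y Z : Type} (dY : Y → Y → ℝ) (dZ : Z → Z → ℝ) (f : Y → Z) : Prop :=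
  ∃ ρm ρp : ℝ → ℝ, Monotone ρm ∧ Monotone ρp ∧
    Filter.Tendsto ρm Filter.atTop Filter.atTop ∧
    ∀ x y : Y, ρm (dY x y) ≤ dZ (f x) (f y) ∧ dZ (f x) (f y) ≤ ρp (dY x y)

/-- The metric of the wedge `W` of two copies of the real line at the basepoint `0`. -/
noncomputable def twoLinesDist (u v : ℝ × Bool) : ℝ :=
  if u.2 = v.2 then |u.1 - v.1| else |u.1| + |v.1|

/-!
Coarsely, `ℝ` has two ends and the wedge has four. A coarse embedding carries a sequence going to
infinity with bounded steps to another such sequence, and keeps divergent sequences divergent. In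
`ℝ`, a sequence going to infinity with bounded steps cannot keep jumping across `0`, so it tends to
`+∞` or to `-∞`; and two of them with the same limit cannot diverge from each other, since the one
that is behind would have to jump over a point of the other. So no three are pairwise divergent.
-/

open Filter

/-- A coarse ray for the distance function `d`: a sequence with bounded steps going to infinity.
It plays the role of a proper ray in a space of ends, but is only required to be coarsely connected.
-/
structure IsCoarseRay {Y : Type*} (d : Y → Y → ℝ) (r : ℕ → Y) : Prop where
  exists_step_le : ∃ C, ∀ n, d (r n) (r (n + 1)) ≤ C
  tendsto_dist : Tendsto (fun n ↦ d (r 0) (r n)) atTop atTop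

/-- Two sequences are coarsely divergent if their tails get arbitrarily far apart. For coarse rays
this says that they lead to different ends. -/
def CoarselyDivergent {Y : Type*} (d : Y → Y → ℝ) (r s : ℕ → Y) : Prop :=
  Tendsto (fun p : ℕ × ℕ ↦ d (r p.1) (s p.2)) atTop atTop

namespace CoarseEmbedD

variable {Y Z : Type} {dY : Y → Y → ℝ} {dZ : Z → Z → ℝ} {f : Y → Z}

theorem tendsto_dist {α : Type*} {l : Filter α} {u v : α → Y} (hf : CoarseEmbedD dY dZ f)
    (huv : Tendsto (fun x ↦ dY (u x) (v x)) l atTop) :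
    Tendsto (fun x ↦ dZ (f (u x)) (f (v x))) l atTop := by
  obtain ⟨ρm, _, _, _, hρm, hbound⟩ := hf
  exact tendsto_atTop_mono (fun x ↦ (hbound (u x) (v x)).1) (hρm.comp huv)

theorem isCoarseRay_comp {r : ℕ → Y} (hf : CoarseEmbedD dY dZ f) (hr : IsCoarseRay dY r) :
    IsCoarseRay dZ (f ∘ r) where
  exists_step_le := by
    obtain ⟨_, ρp, _, hρp, _, hbound⟩ := hf
    obtain ⟨C, hC⟩ := hr.exists_step_le
    exact ⟨ρp C, fun n ↦ (hbound _ _).2.trans (hρp (hC n))⟩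
  tendsto_dist := hf.tendsto_dist hr.tendsto_dist

theorem coarselyDivergent_comp {r s : ℕ → Y} (hf : CoarseEmbedD dY dZ f)
    (hrs : CoarselyDivergent dY r s) : CoarselyDivergent dZ (f ∘ r) (f ∘ s) :=
  hf.tendsto_dist hrs

end CoarseEmbedD

section Real

variable {a b : ℕ → ℝ}

theorem le_of_dist_succ_le_of_lt_dist {c C : ℝ} {N : ℕ} (hstep : ∀ n, dist (a n) (a (n + 1)) ≤ C)
    (hfar : ∀ n ≥ N, C < dist (a n) c) (hN : a N ≤ c) : ∀ n ≥ N, a n ≤ c := by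
  intro n hn
  induction n, hn using Nat.le_induction with
  | base => exact hN
  | succ n hn ih =>
    by_contra! hjump
    have hcross : dist (a (n + 1)) c ≤ dist (a n) (a (n + 1)) := by
      rw [dist_comm (a n), Real.dist_eq, Real.dist_eq, abs_of_pos (sub_pos.2 hjump)]
      exact (sub_le_sub_left ih _).trans (le_abs_self _)
    exact (hfar (n + 1) (by lia)).not_ge (hcross.trans (hstep n))

theorem not_tendsto_atTop_of_dist_succ_le_of_lt_dist {c C : ℝ} {N : ℕ}
    (hstep : ∀ n, dist (a n) (a (n + 1)) ≤ C) (hfar : ∀ n ≥ N, C < dist (a n) c) (hN : a N ≤ c) :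
    ¬ Tendsto a atTop atTop := by
  intro ha
  obtain ⟨n, hcn, hNn⟩ := ((ha.eventually_gt_atTop c).and (eventually_ge_atTop N)).exists
  exact (le_of_dist_succ_le_of_lt_dist hstep hfar hN n hNn).not_gt hcn

theorem IsCoarseRay.neg (ha : IsCoarseRay dist a) : IsCoarseRay dist (-a) where
  exists_step_le := by simpa only [Pi.neg_apply, dist_neg_neg] using ha.exists_step_le
  tendsto_dist := by simpa only [Pi.neg_apply, dist_neg_neg] using ha.tendsto_dist

theorem CoarselyDivergent.neg (hab : CoarselyDivergent dist a b) :
    CoarselyDivergent dist (-a) (-b) := by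
  simpa only [CoarselyDivergent, Pi.neg_apply, dist_neg_neg] using hab

theorem IsCoarseRay.tendsto_abs (ha : IsCoarseRay dist a) :
    Tendsto (fun n ↦ |a n|) atTop atTop := by
  have hle (n : ℕ) : dist (a 0) (a n) ≤ |a 0| + |a n| := abs_sub _ _
  exact (tendsto_atTop_mono hle ha.tendsto_dist).atTop_of_const_add _

theorem IsCoarseRay.tendsto_atTop_or_atBot (ha : IsCoarseRay dist a) :
    Tendsto a atTop atTop ∨ Tendsto a atTop atBot := by
  obtain ⟨C, hstep⟩ := ha.exists_step_le
  obtain ⟨N, hN⟩ := eventually_atTop.1 (ha.tendsto_abs.eventually_gt_atTop C)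
  rcases le_total 0 (a N) with hpos | hneg
  · left
    have hnonneg : ∀ n ≥ N, -a n ≤ 0 :=
      le_of_dist_succ_le_of_lt_dist (a := -a) (by simpa using hstep) (by simpa using hN)
        (by simpa using hpos)
    refine ha.tendsto_abs.congr' ?_
    filter_upwards [eventually_ge_atTop N] with n hn
    exact abs_of_nonneg (neg_nonpos.1 (hnonneg n hn))
  · right
    have hnonpos : ∀ n ≥ N, a n ≤ 0 :=
      le_of_dist_succ_le_of_lt_dist hstep (by simpa using hN) hneg
    refine tendsto_neg_atTop_iff.1 (ha.tendsto_abs.congr' ?_)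
    filter_upwards [eventually_ge_atTop N] with n hn
    exact abs_of_nonpos (hnonpos n hn)

theorem IsCoarseRay.not_coarselyDivergent_of_tendsto_atTop (ha : IsCoarseRay dist a)
    (hb : IsCoarseRay dist b) (ha_top : Tendsto a atTop atTop) (hb_top : Tendsto b atTop atTop) :
    ¬ CoarselyDivergent dist a b := by
  intro hab
  obtain ⟨A, hA⟩ := ha.exists_step_le
  obtain ⟨B, hB⟩ := hb.exists_step_le
  obtain ⟨N, hN⟩ := eventually_atTop_prod_self'.1
    ((hab.eventually_gt_atTop A).and (hab.eventually_gt_atTop B))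
  rcases le_total (a N) (b N) with hle | hle
  · exact not_tendsto_atTop_of_dist_succ_le_of_lt_dist hA
      (fun n hn ↦ (hN n hn N le_rfl).1) hle ha_top
  · exact not_tendsto_atTop_of_dist_succ_le_of_lt_dist hB
      (fun n hn ↦ dist_comm (a N) (b n) ▸ (hN N le_rfl n hn).2) hle hb_top

theorem IsCoarseRay.not_coarselyDivergent_of_tendsto_atTop_iff (ha : IsCoarseRay dist a)
    (hb : IsCoarseRay dist b) (hab : Tendsto a atTop atTop ↔ Tendsto b atTop atTop) :
    ¬ CoarselyDivergent dist a b := by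
  by_cases ha_top : Tendsto a atTop atTop
  · exact ha.not_coarselyDivergent_of_tendsto_atTop hb ha_top (hab.1 ha_top)
  · have ha_bot := ha.tendsto_atTop_or_atBot.resolve_left ha_top
    have hb_bot := hb.tendsto_atTop_or_atBot.resolve_left (mt hab.2 ha_top)
    exact fun h ↦ ha.neg.not_coarselyDivergent_of_tendsto_atTop hb.neg
      (tendsto_neg_atTop_iff.2 ha_bot) (tendsto_neg_atTop_iff.2 hb_bot) h.neg

theorem not_pairwise_coarselyDivergent {ι : Type*} [Fintype ι] (hι : 2 < Fintype.card ι)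
    {r : ι → ℕ → ℝ} (hr : ∀ i, IsCoarseRay dist (r i)) :
    ¬ Pairwise fun i j ↦ CoarselyDivergent dist (r i) (r j) := by
  intro hdiv
  obtain ⟨i, j, hij, hends⟩ := Fintype.exists_ne_map_eq_of_card_lt
    (fun i ↦ Tendsto (r i) atTop atTop) (by rwa [Fintype.card_prop])
  exact (hr i).not_coarselyDivergent_of_tendsto_atTop_iff (hr j) hends.to_iff (hdiv hij)

end Real

/-- The four rays of the wedge, indexed by the line and by the sign of the direction. -/
noncomputable def twoLinesRay (i : Bool × ℤˣ) (n : ℕ) : ℝ × Bool :=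
  ((i.2 : ℤ) * n, i.1)

theorem twoLinesDist_twoLinesRay_self (i : Bool × ℤˣ) (m n : ℕ) :
    twoLinesDist (twoLinesRay i m) (twoLinesRay i n) = |(m : ℝ) - n| := by
  obtain ⟨line, sign⟩ := i
  rcases Int.units_eq_one_or sign with rfl | rfl
  · simp [twoLinesDist, twoLinesRay]
  · simp [twoLinesDist, twoLinesRay, neg_add_eq_sub, abs_sub_comm]

theorem twoLinesDist_twoLinesRay_of_ne {i j : Bool × ℤˣ} (hij : i ≠ j) (m n : ℕ) :
    twoLinesDist (twoLinesRay i m) (twoLinesRay j n) = m + n := by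
  obtain ⟨line, sign⟩ := i
  obtain ⟨line', sign'⟩ := j
  by_cases hline : line = line'
  · subst hline
    obtain rfl : sign = -sign' := Int.units_ne_iff_eq_neg.1 fun h ↦ hij (by rw [h])
    calc twoLinesDist (twoLinesRay (line, -sign') m) (twoLinesRay (line, sign') n)
        = |-(((sign' : ℤ) : ℝ) * (m + n))| := by
          simp only [twoLinesDist, twoLinesRay, if_true, Units.val_neg, Int.cast_neg]
          ring_nf
      _ = |(m : ℝ) + n| := by
          rw [abs_neg, abs_mul, ← Int.cast_abs, Int.isUnit_iff_abs_eq.1 sign'.isUnit]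
          simp
      _ = m + n := abs_of_nonneg (by positivity)
  · simp [twoLinesDist, twoLinesRay, hline, abs_mul, ← Int.cast_abs,
      Int.isUnit_iff_abs_eq.1 (Units.isUnit _)]

theorem isCoarseRay_twoLinesRay (i : Bool × ℤˣ) : IsCoarseRay twoLinesDist (twoLinesRay i) where
  exists_step_le := ⟨1, fun n ↦ by simp [twoLinesDist_twoLinesRay_self]⟩
  tendsto_dist := by
    simpa [twoLinesDist_twoLinesRay_self] using tendsto_natCast_atTop_atTop (R := ℝ)

theorem pairwise_coarselyDivergent_twoLinesRay :
    Pairwise fun i j ↦ CoarselyDivergent twoLinesDist (twoLinesRay i) (twoLinesRay j) := by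
  intro i j hij
  simp only [CoarselyDivergent, twoLinesDist_twoLinesRay_of_ne hij, ← prod_atTop_atTop_eq]
  exact (tendsto_natCast_atTop_atTop.comp tendsto_fst).atTop_add_atTop
    (tendsto_natCast_atTop_atTop.comp tendsto_snd)

theorem stmt9_general {Y : Type} {dY : Y → Y → ℝ} {ι : Type*} [Fintype ι]
    (hι : 2 < Fintype.card ι) {r : ι → ℕ → Y} (hr : ∀ i, IsCoarseRay dY (r i))
    (hdiv : Pairwise fun i j ↦ CoarselyDivergent dY (r i) (r j)) :
    ¬ ∃ f : Y → ℝ, CoarseEmbedD dY (fun a b : ℝ => dist a b) f := by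
  rintro ⟨f, hf⟩
  exact not_pairwise_coarselyDivergent hι (fun i ↦ hf.isCoarseRay_comp (hr i))
    fun _ _ hij ↦ hf.coarselyDivergent_comp (hdiv hij)

/-- There is no coarse embedding of the wedge of two copies of `ℝ`
(joined at `0`) into `ℝ`. -/
theorem stmt9 :
    ¬ ∃ f : ℝ × Bool → ℝ, CoarseEmbedD twoLinesDist (fun a b : ℝ => dist a b) f := by
  exact stmt9_general (by simp) isCoarseRay_twoLinesRay pairwise_coarselyDivergent_twoLinesRay
end

section
/- Let X be an ∞-pseudo-metric space of bounded geometry, i.e., for every r > 0 there is a natural number N such that every ball B(x,r) contains at most N points. Then for each R > 0 there is a natural number n and a decomposition X = ⋃_{i=1}^n X_i such that each X_i is R-discrete: any two distinct points of X_i are at distance greater than R (so each X_i is the union of an R-disjoint uniformly bounded family of singletons). -/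
open scoped ENNReal

/- Join two distinct points of `X` when they are at distance at most `R`. A set is `R`-discrete
exactly when it is independent in this graph, so the decompositions sought are its proper colourings
with finitely many colours. If the `R`-balls have at most `N` points then every point has fewer
than `N` neighbours, and colouring greedily along a well-order of `X` never needs more than `N`
colours. -/

theorem exists_notMem_range_of_enatCard_lt {ι α : Type*} (f : ι → α)
    (h : ENat.card ι < ENat.card α) : ∃ a, a ∉ Set.range f := by
  by_contra! hf
  refine h.not_ge ?_
  calc ENat.card α = (f '' Set.univ).encard := by
        rw [Set.image_univ, Set.eq_univ_of_forall hf, Set.encard_univ]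
    _ ≤ (Set.univ : Set ι).encard := Set.encard_image_le f _
    _ = ENat.card ι := Set.encard_univ ι

section GreedyColoring

variable {V α : Type*} (G : SimpleGraph V)

theorem nonempty_coloring_of_encard_lt_and_adj_lt [LinearOrder V] [WellFoundedLT V]
    (h : ∀ v, {w | w < v ∧ G.Adj v w}.encard < ENat.card α) : Nonempty (G.Coloring α) := by
  have exists_free_color (v : V) (c : ∀ w, w < v → α) :
      ∃ a, ∀ w (hw : w < v), G.Adj v w → a ≠ c w hw := by
    let used : {w | w < v ∧ G.Adj v w} → α := fun w ↦ c w w.2.1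
    obtain ⟨a, ha⟩ := exists_notMem_range_of_enatCard_lt used (h v)
    exact ⟨a, fun w hw hvw hac ↦ ha ⟨⟨w, hw, hvw⟩, hac.symm⟩⟩
  choose freeColor freeColor_ne using exists_free_color
  let color : V → α := wellFounded_lt.fix freeColor
  have color_eq (v : V) : color v = freeColor v fun w _ ↦ color w :=
    wellFounded_lt.fix_eq freeColor v
  have color_ne_of_lt {v w : V} (hw : w < v) (hvw : G.Adj v w) : color v ≠ color w := by
    rw [color_eq v]
    exact freeColor_ne v _ w hw hvw
  refine ⟨.mk color fun {v w} hvw ↦ ?_⟩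
  obtain hlt | hlt := hvw.ne.lt_or_gt
  · exact (color_ne_of_lt hlt hvw.symm).symm
  · exact color_ne_of_lt hlt hvw

theorem nonempty_coloring_of_encard_neighborSet_lt
    (h : ∀ v, (G.neighborSet v).encard < ENat.card α) : Nonempty (G.Coloring α) := by
  obtain ⟨_, _⟩ := exists_wellFoundedLT V
  exact nonempty_coloring_of_encard_lt_and_adj_lt G fun v ↦
    (Set.encard_le_encard fun _ hw ↦ hw.2).trans_lt (h v)

end GreedyColoring

/-- The graph joining distinct points of `X` at distance at most `R`, i.e. the `1`-skeleton of the
Vietoris–Rips complex at scale `R`. Its proper colourings are the decompositions of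
`X` into `R`-discrete sets. -/
def ripsGraph (X : Type*) [PseudoEMetricSpace X] (R : ℝ≥0∞) : SimpleGraph X where
  Adj x y := x ≠ y ∧ edist x y ≤ R
  symm := ⟨fun x y h ↦ ⟨h.1.symm, edist_comm x y ▸ h.2⟩⟩
  loopless := ⟨fun _ h ↦ h.1 rfl⟩

namespace ripsGraph

variable {X : Type*} [PseudoEMetricSpace X] {R : ℝ≥0∞}

theorem isIndepSet_iff_isSeparated {s : Set X} :
    (ripsGraph X R).IsIndepSet s ↔ Metric.IsSeparated R s :=
  forall₅_congr fun x _ y _ hxy ↦ by simp [ripsGraph, hxy]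

theorem neighborSet_eq_closedEBall_sdiff_singleton (x : X) :
    (ripsGraph X R).neighborSet x = Metric.closedEBall x R \ {x} := by
  ext y
  simp [ripsGraph, edist_comm x y, eq_comm (a := x), and_comm]

theorem encard_neighborSet_lt {x : X} (hfin : (Metric.closedEBall x R).Finite) :
    ((ripsGraph X R).neighborSet x).encard < (Metric.closedEBall x R).encard := by
  rw [neighborSet_eq_closedEBall_sdiff_singleton]
  exact hfin.sdiff.encard_lt_encard
    (Set.sdiff_singleton_ssubset.2 Metric.mem_closedEBall_self)

end ripsGraph

theorem stmt11_general {X : Type*} [PseudoEMetricSpace X] {R : ℝ≥0∞} {N : ℕ}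
    (hN : ∀ x : X, (Metric.closedEBall x R).encard ≤ N) :
    ∃ Xi : Fin N → Set X, (⋃ i, Xi i) = Set.univ ∧ ∀ i, Metric.IsSeparated R (Xi i) := by
  have degree_lt (x : X) : ((ripsGraph X R).neighborSet x).encard < ENat.card (Fin N) := by
    rw [ENat.card_eq_coe_fintype_card, Fintype.card_fin]
    exact (ripsGraph.encard_neighborSet_lt (Set.finite_of_encard_le_coe (hN x))).trans_le (hN x)
  obtain ⟨C⟩ := nonempty_coloring_of_encard_neighborSet_lt _ degree_lt
  refine ⟨C.colorClass, ?_, fun i ↦ ?_⟩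
  · exact Set.iUnion_eq_univ_iff.2 fun x ↦ ⟨C x, C.mem_colorClass x⟩
  · exact ripsGraph.isIndepSet_iff_isSeparated.1 (C.isIndepSet_colorClass i)

/-- If an ∞-pseudo-metric space `X` has bounded geometry (for every `r > 0`
there is `N` with every ball `B(x,r)` containing at most `N` points), then for each
`R > 0` there are `n` and a decomposition `X = ⋃_{i=1}^n X_i` with each `X_i`
`R`-discrete: distinct points of `X_i` are at distance greater than `R`. -/
theorem stmt11 {X : Type} [PseudoEMetricSpace X]
    (hbg : ∀ r : ℝ, 0 < r → ∃ N : ℕ, ∀ x : X,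
      (EMetric.closedBall x (ENNReal.ofReal r)).Finite ∧
      (EMetric.closedBall x (ENNReal.ofReal r)).ncard ≤ N) :
    ∀ R : ℝ, 0 < R → ∃ (n : ℕ) (Xi : Fin n → Set X),
      (⋃ i, Xi i) = Set.univ ∧
      (∀ i, ∀ x ∈ Xi i, ∀ y ∈ Xi i, x ≠ y → ENNReal.ofReal R < edist x y) := by
  intro R hR
  obtain ⟨N, hN⟩ := hbg R hR
  obtain ⟨Xi, hcover, hsep⟩ :=
    stmt11_general fun x ↦ Set.encard_le_coe_iff_finite_ncard_le.2 (hN x)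
  exact ⟨N, Xi, hcover, fun i _ hx _ hy ↦ hsep i hx hy⟩
end
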